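/- Let P^y denote the law of a Brownian bridge from position 0 at time 0 to position y at time 1, and let K_1(a) denote the local time it accumulates at position a up to time 1. Then for every a > 0 and every y ≥ 0, E^y[exp(4a K_1(y)²)] ≤ E^0[exp(4a K_1(0)²)] and E^y[exp(4a K_1(−y)²)] ≤ E^0[exp(4a K_1(0)²)]. -/

import Mathlib

/- Formalization preamble: Brownian motion, (occupation-density) local time
fields, martingales with respect to a (raw) filtration, stochastic integrals
characterized through their quadratic (co)variations, weak solutions of the
exploration SDEs of Pardoux–Wakolbinger and of Feller's branching diffusion
with logistic growth (formulated, equivalently, as a martingale problem: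
`Z_t = x + ∫₀ᵗ Z_u (θ - γ(Z_u + 2 z(u))) du + M_t` where `M` is a continuous
martingale with quadratic variation `⟨M⟩_t = 4∫₀ᵗ Z_u du`, which encodes
`M_t = 2∫₀ᵗ √(Z_u) dW_u` for a standard Brownian motion `W`). -/

open MeasureTheory ProbabilityTheory Set
open scoped ENNReal NNReal

noncomputable section

/-- `B` is a standard Brownian motion (for nonnegative times) under `P`:
`B₀ = 0`, continuous paths, independent increments, and Gaussian increments
`B_t - B_s ∼ N(0, t-s)` for `0 ≤ s ≤ t`. -/
structure IsBrownianMotion {Ω : Type} [MeasurableSpace Ω] (P : Measure Ω)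
    (B : ℝ → Ω → ℝ) : Prop where
  isProb : IsProbabilityMeasure P
  meas : ∀ s, Measurable (B s)
  start : ∀ᵐ ω ∂P, B 0 ω = 0
  cont : ∀ᵐ ω ∂P, Continuous fun s => B s ω
  incr : ∀ s t : ℝ, 0 ≤ s → s ≤ t →
    P.map (fun ω => B t ω - B s ω) = gaussianReal 0 (t - s).toNNReal
  indep : ∀ (n : ℕ) (t : Fin (n + 1) → ℝ), Monotone t → 0 ≤ t 0 →
    iIndepFun
      (fun i : Fin n => fun ω => B (t i.succ) ω - B (t i.castSucc) ω) P

/-- `L` is the (semimartingale) local time field of the process `H`.  For all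
the processes considered here (Brownian motion plus a finite-variation part)
the quadratic variation is `⟨H⟩_s = s`, so local time is characterized as the
jointly continuous occupation density:
`∫₀ˢ f(H_r) dr = ∫ f(t) L_s(t) dt` for all nonnegative measurable `f`. -/
structure IsLocalTimeField {Ω : Type} [MeasurableSpace Ω] (P : Measure Ω)
    (H : ℝ → Ω → ℝ) (L : ℝ → ℝ → Ω → ℝ) : Prop where
  meas : ∀ s t, Measurable (L s t)
  nonneg : ∀ s t ω, 0 ≤ L s t ω
  zero : ∀ t ω, L 0 t ω = 0
  mono : ∀ t ω, Monotone fun s => L s t ω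
  cont : ∀ᵐ ω ∂P, Continuous fun p : ℝ × ℝ => L p.1 p.2 ω
  occupation : ∀ᵐ ω ∂P, ∀ s : ℝ, 0 ≤ s → ∀ f : ℝ → ℝ≥0∞, Measurable f →
    ∫⁻ r in Icc (0 : ℝ) s, f (H r ω) = ∫⁻ t, f t * ENNReal.ofReal (L s t ω)

/-- `z` is (an extension to `ℝ` of) an element of `E = C_c(ℝ₊, ℝ₊)`:
continuous, nonnegative, with compact support. -/
def GoodPath (z : ℝ → ℝ) : Prop :=
  Continuous z ∧ HasCompactSupport z ∧ ∀ t, 0 ≤ z t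

/-- `S_x = inf {s > 0 : L_s(0) > x}`, valued in `ℝ≥0∞` (`∞` if the level is
never reached). -/
def hitTime {Ω : Type} (L : ℝ → ℝ → Ω → ℝ) (x : ℝ) (ω : Ω) : ℝ≥0∞ :=
  ⨅ s ∈ {s : ℝ | 0 < s ∧ x < L s 0 ω}, ENNReal.ofReal s

/-- The real value of `S_x` (junk value `0` if `S_x = ∞`). -/
def hitTimeR {Ω : Type} (L : ℝ → ℝ → Ω → ℝ) (x : ℝ) (ω : Ω) : ℝ :=
  (hitTime L x ω).toReal

/-- A filtration, given as a monotone family of sub-σ-algebras. -/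
def IsFiltrationFamily {Ω : Type} [m0 : MeasurableSpace Ω] (F : ℝ → MeasurableSpace Ω) : Prop :=
  Monotone F ∧ ∀ t, F t ≤ m0

/-- `M` is a martingale with respect to the σ-algebras `F` along the index
set `T`: integrable, adapted, and `E[M_t | F_s] = M_s` for `s ≤ t` in `T`. -/
def IsMartingaleOn {Ω : Type} [MeasurableSpace Ω] (F : ℝ → MeasurableSpace Ω)
    (P : Measure Ω) (M : ℝ → Ω → ℝ) (T : Set ℝ) : Prop :=
  (∀ t ∈ T, Integrable (M t) P) ∧ (∀ t ∈ T, @StronglyMeasurable _ _ _ (F t) (M t)) ∧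
    ∀ s ∈ T, ∀ t ∈ T, s ≤ t → P[M t|F s] =ᵐ[P] M s

/-- `B` is a Brownian motion which is moreover an `F`-martingale with
`⟨B⟩_t = t` (i.e. an `F`-Brownian motion). -/
def IsBMFiltration {Ω : Type} [MeasurableSpace Ω] (F : ℝ → MeasurableSpace Ω)
    (P : Measure Ω) (B : ℝ → Ω → ℝ) : Prop :=
  IsBrownianMotion P B ∧ IsFiltrationFamily F ∧ IsMartingaleOn F P B (Ici 0) ∧
    IsMartingaleOn F P (fun t ω => B t ω ^ 2 - t) (Ici 0)

/-- `I` is (a version of) the stochastic integral `∫₀^· φ dB` against the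
`F`-Brownian motion `B`, characterized by: `I` is a continuous `F`-martingale
started at `0` with `⟨I⟩ = ∫₀^· φ² dr` and `⟨I, B⟩ = ∫₀^· φ dr`. -/
def IsStochIntegralBM {Ω : Type} [MeasurableSpace Ω] (F : ℝ → MeasurableSpace Ω)
    (P : Measure Ω) (B φ I : ℝ → Ω → ℝ) : Prop :=
  (∀ᵐ ω ∂P, I 0 ω = 0) ∧ (∀ᵐ ω ∂P, Continuous fun s => I s ω) ∧
  IsMartingaleOn F P I (Ici 0) ∧
  IsMartingaleOn F P (fun s ω => I s ω ^ 2 - ∫ r in Icc (0 : ℝ) s, φ r ω ^ 2) (Ici 0) ∧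
  IsMartingaleOn F P (fun s ω => I s ω * B s ω - ∫ r in Icc (0 : ℝ) s, φ r ω) (Ici 0)

/-- `(P, B, H, L)` is a weak solution of the exploration SDE
`H_s = B_s + ½ L_s(0) + (θ/2) s − γ ∫₀ˢ (z(H_r) + L_r(H_r)) dr`, `s ≥ 0`,
where `L` is the local time field of `H` and `H` is reflected above `0`. -/
def SolvesExplorSDE (θ γ : ℝ) (z : ℝ → ℝ) {Ω : Type} [MeasurableSpace Ω] (P : Measure Ω)
    (B H : ℝ → Ω → ℝ) (L : ℝ → ℝ → Ω → ℝ) : Prop :=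
  IsBrownianMotion P B ∧ IsLocalTimeField P H L ∧ (∀ s, Measurable (H s)) ∧
  (∀ᵐ ω ∂P, Continuous fun s => H s ω) ∧
  (∀ᵐ ω ∂P, ∀ s, 0 ≤ s → 0 ≤ H s ω) ∧
  (∀ᵐ ω ∂P, ∀ s, 0 ≤ s →
    H s ω = B s ω + (1 / 2) * L s 0 ω + (θ / 2) * s
      - γ * ∫ r in Icc (0 : ℝ) s, (z (H r ω) + L r (H r ω) ω))

/-- `(P, B, H, L)` is a weak solution of the exploration SDE reflected in the
interval `[0, K]`:
`H_s = B_s + (θ/2) s − γ ∫₀ˢ (z(H_r) + L_r(H_r)) dr + ½ L_s(0) − ½ L_s(K⁻)`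
(for the jointly continuous local time field, `L_s(K⁻) = L_s(K)`). -/
def SolvesReflectedExplorSDE (θ γ : ℝ) (z : ℝ → ℝ) (K : ℝ) {Ω : Type} [MeasurableSpace Ω]
    (P : Measure Ω) (B H : ℝ → Ω → ℝ) (L : ℝ → ℝ → Ω → ℝ) : Prop :=
  IsBrownianMotion P B ∧ IsLocalTimeField P H L ∧ (∀ s, Measurable (H s)) ∧
  (∀ᵐ ω ∂P, Continuous fun s => H s ω) ∧
  (∀ᵐ ω ∂P, ∀ s, 0 ≤ s → H s ω ∈ Icc 0 K) ∧
  (∀ᵐ ω ∂P, ∀ s, 0 ≤ s →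
    H s ω = B s ω + (θ / 2) * s
      - γ * (∫ r in Icc (0 : ℝ) s, (z (H r ω) + L r (H r ω) ω))
      + (1 / 2) * L s 0 ω - (1 / 2) * L s K ω)

/-- `Z` solves `Z_t = x + ∫₀ᵗ Z_u (θ − γ(Z_u + 2·env(u))) du + 2∫₀ᵗ √(Z_u) dW_u`
(with a possibly random environment `env`), formulated as: `Z_t - x - ∫₀ᵗ …du`
equals a continuous `F`-martingale `M` with `⟨M⟩_t = 4 ∫₀ᵗ Z_u du`. -/
structure SolvesLogisticAux (θ γ : ℝ) {Ω : Type} [MeasurableSpace Ω]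
    (env : ℝ → Ω → ℝ) (x : ℝ) (P : Measure Ω) (F : ℝ → MeasurableSpace Ω)
    (Z M : ℝ → Ω → ℝ) : Prop where
  isProb : IsProbabilityMeasure P
  filt : IsFiltrationFamily F
  measZ : ∀ t, Measurable (Z t)
  adaptedZ : ∀ t, 0 ≤ t → @StronglyMeasurable _ _ _ (F t) (Z t)
  contZ : ∀ᵐ ω ∂P, Continuous fun t => Z t ω
  nonnegZ : ∀ᵐ ω ∂P, ∀ t, 0 ≤ t → 0 ≤ Z t ω
  init : ∀ᵐ ω ∂P, Z 0 ω = x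
  contM : ∀ᵐ ω ∂P, Continuous fun t => M t ω
  startM : ∀ᵐ ω ∂P, M 0 ω = 0
  mart : IsMartingaleOn F P M (Ici 0)
  qv : IsMartingaleOn F P
    (fun t ω => M t ω ^ 2 - 4 * ∫ u in Icc (0 : ℝ) t, Z u ω) (Ici 0)
  sde : ∀ᵐ ω ∂P, ∀ t, 0 ≤ t →
    Z t ω = x + (∫ u in Icc (0 : ℝ) t, Z u ω * (θ - γ * (Z u ω + 2 * env u ω))) + M t ω

/-- `Z` is a weak solution of Feller's branching diffusion with logistic
growth in the (deterministic) environment `z`, with ancestral mass `x`: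
`Z_t = x + ∫₀ᵗ Z_u (θ − γ(Z_u + 2 z(u))) du + 2 ∫₀ᵗ √(Z_u) dW_u`. -/
def SolvesLogisticSDE (θ γ : ℝ) (z : ℝ → ℝ) (x : ℝ) {Ω : Type} [MeasurableSpace Ω]
    (P : Measure Ω) (Z : ℝ → Ω → ℝ) : Prop :=
  ∃ F M, SolvesLogisticAux θ γ (fun u _ => z u) x P F Z M

/-- As `SolvesLogisticAux`, but only on the time interval `[0, K)`
(the solution "killed at time `K`"). -/
structure SolvesLogisticAuxUpTo (θ γ : ℝ) {Ω : Type} [MeasurableSpace Ω]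
    (env : ℝ → Ω → ℝ) (x K : ℝ) (P : Measure Ω) (F : ℝ → MeasurableSpace Ω)
    (Z M : ℝ → Ω → ℝ) : Prop where
  isProb : IsProbabilityMeasure P
  filt : IsFiltrationFamily F
  measZ : ∀ t, Measurable (Z t)
  adaptedZ : ∀ t ∈ Ico (0 : ℝ) K, @StronglyMeasurable _ _ _ (F t) (Z t)
  contZ : ∀ᵐ ω ∂P, ContinuousOn (fun t => Z t ω) (Ico 0 K)
  nonnegZ : ∀ᵐ ω ∂P, ∀ t ∈ Ico (0 : ℝ) K, 0 ≤ Z t ω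
  init : ∀ᵐ ω ∂P, Z 0 ω = x
  contM : ∀ᵐ ω ∂P, ContinuousOn (fun t => M t ω) (Ico 0 K)
  startM : ∀ᵐ ω ∂P, M 0 ω = 0
  mart : IsMartingaleOn F P M (Ico 0 K)
  qv : IsMartingaleOn F P
    (fun t ω => M t ω ^ 2 - 4 * ∫ u in Icc (0 : ℝ) t, Z u ω) (Ico 0 K)
  sde : ∀ᵐ ω ∂P, ∀ t ∈ Ico (0 : ℝ) K,
    Z t ω = x + (∫ u in Icc (0 : ℝ) t, Z u ω * (θ - γ * (Z u ω + 2 * env u ω))) + M t ω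

/-- The path `z + Z(ω)`, where the random part is put to `0` at negative
times (paths indexed by `ℝ₊` are modelled as functions on `ℝ`). -/
def extendPath {Ω : Type} (z : ℝ → ℝ) (Z : ℝ → Ω → ℝ) (ω : Ω) : ℝ → ℝ :=
  fun t => z t + if 0 ≤ t then Z t ω else 0

/-- `κ` is the family of transition probabilities `(P_x)_{x ≥ 0}` on
`E = C_c(ℝ₊, ℝ₊)`: `P_0(z, ·) = δ_z` and, for `x > 0`, `P_x(z, ·)` is the law
of `z + Z^{x,z}`, where `Z^{x,z}` is any weak solution of the logistic
Feller SDE in environment `z` with ancestral mass `x`. -/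
def IsLogisticKernelFamily (θ γ : ℝ)
    (κ : ℝ → Kernel (ℝ → ℝ) (ℝ → ℝ)) : Prop :=
  (∀ x, IsMarkovKernel (κ x)) ∧
  (∀ z : ℝ → ℝ, GoodPath z → (κ 0) z = Measure.dirac z) ∧
  ∀ x : ℝ, 0 < x → ∀ z : ℝ → ℝ, GoodPath z →
    ∀ (Ω : Type) (_ : MeasurableSpace Ω) (P : Measure Ω) (Z : ℝ → Ω → ℝ),
      SolvesLogisticSDE θ γ z x P Z →
      (κ x) z = P.map (extendPath z Z)

end

/-!
All moments of the bridge local time are given by Kac's formula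
`E^y[K₁(b)ᵏ] = k! ∫_{0 < s₁ < ⋯ < s_k < 1} p_s(b - s₁ y, …, b - s_k y) ds`,
where `p_s` is the joint density of the standard bridge at the times `s`: the `k`-th moment of
the occupation time of a small ball around `b` is an average of the right-hand side over nearby
points, and the passage to the limit is dominated because `∫ p_s(0) ds` is finite. A centred
Gaussian density is maximal at the origin, so every moment of `K₁(b)` under `P^y` is at most the
same moment of `K₁(0)` under `P^0`, and the exponential is a power series with nonnegative
coefficients.
-/

section

open Filter Topology

section PiMeasure

variable {ι : Type*} [Fintype ι]

theorem lmarginal_prod_eq_prod_mul_prod [DecidableEq ι] {E : ι → Type*}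
    [∀ i, MeasurableSpace (E i)] (μ : ∀ i, Measure (E i)) [∀ i, SigmaFinite (μ i)]
    {f : ∀ i, E i → ℝ≥0∞} (hf : ∀ i, Measurable (f i)) (s : Finset ι) (x : ∀ i, E i) :
    (∫⋯∫⁻_s, fun y => ∏ i, f i (y i) ∂μ) x = (∏ i ∈ s, ∫⁻ a, f i a ∂μ i) * ∏ i ∈ sᶜ, f i (x i) := by
  induction s using Finset.induction_on generalizing x with
  | empty => simp
  | insert i s hi ih =>
    have h_split (a : E i) : ∏ j ∈ sᶜ, f j (Function.update x i a j) =
        f i a * ∏ j ∈ (insert i s)ᶜ, f j (x j) := by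
      rw [← Finset.mul_prod_erase sᶜ _ (Finset.mem_compl.2 hi), Function.update_self,
        Finset.compl_insert]
      congr 1
      exact Finset.prod_congr rfl fun j hj => by
        rw [Function.update_of_ne (Finset.ne_of_mem_erase hj)]
    rw [lmarginal_insert _ (by fun_prop) hi]
    simp_rw [ih, h_split]
    rw [lintegral_const_mul _ ((hf i).mul_const _), lintegral_mul_const _ (hf i),
      Finset.prod_insert hi]
    ring

theorem lintegral_fintype_prod_eq_prod {E : ι → Type*} [∀ i, MeasurableSpace (E i)]
    (μ : ∀ i, Measure (E i)) [∀ i, SigmaFinite (μ i)] {f : ∀ i, E i → ℝ≥0∞}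
    (hf : ∀ i, Measurable (f i)) :
    ∫⁻ x, ∏ i, f i (x i) ∂Measure.pi μ = ∏ i, ∫⁻ x, f i x ∂μ i := by
  classical
  cases isEmpty_or_nonempty (∀ i, E i) with
  | inl h =>
    obtain ⟨i, hi⟩ := isEmpty_pi.1 h
    rw [lintegral_of_isEmpty,
      Finset.prod_eq_zero (Finset.mem_univ i) (lintegral_of_isEmpty _ _)]
  | inr h =>
    rw [lintegral_eq_lmarginal_univ h.some, lmarginal_prod_eq_prod_mul_prod μ hf]
    simp

theorem pi_withDensity {E : ι → Type*} [∀ i, MeasurableSpace (E i)]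
    (μ : ∀ i, Measure (E i)) [∀ i, SigmaFinite (μ i)] {f : ∀ i, E i → ℝ≥0∞}
    (hf : ∀ i, Measurable (f i)) [∀ i, SigmaFinite ((μ i).withDensity (f i))] :
    Measure.pi (fun i => (μ i).withDensity (f i)) =
      (Measure.pi μ).withDensity fun x => ∏ i, f i (x i) := by
  classical
  refine Measure.pi_eq fun s hs => ?_
  have h_indicator (x : ∀ i, E i) : (univ.pi s).indicator (fun x => ∏ i, f i (x i)) x =
      ∏ i, (s i).indicator (f i) (x i) := by
    simp only [indicator_apply, mem_univ_pi, Finset.prod_ite_zero, Finset.mem_univ, true_imp_iff]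
  rw [withDensity_apply _ (.univ_pi hs), ← lintegral_indicator (.univ_pi hs)]
  simp_rw [h_indicator]
  rw [lintegral_fintype_prod_eq_prod μ fun i => (hf i).indicator (hs i)]
  exact Finset.prod_congr rfl fun i _ => by
    rw [lintegral_indicator (hs i), withDensity_apply _ (hs i)]

theorem lintegral_pi_comp_perm {α : Type*} [MeasurableSpace α] (μ : Measure α) [SigmaFinite μ]
    (σ : Equiv.Perm ι) (f : (ι → α) → ℝ≥0∞) :
    ∫⁻ x, f (x ∘ σ) ∂Measure.pi (fun _ => μ) = ∫⁻ x, f x ∂Measure.pi fun _ => μ :=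
  (measurePreserving_arrowCongr' (fun _ => μ) (fun _ => μ) σ.symm (MeasurableEquiv.refl α)
    fun _ => MeasurePreserving.id μ).lintegral_comp_emb (MeasurableEquiv.measurableEmbedding _) f

theorem ae_injective_pi {α : Type*} [MeasurableSpace α] [MeasurableEq α] (μ : Measure α)
    [SigmaFinite μ] [NullSingletonClass μ] :
    ∀ᵐ x : ι → α ∂Measure.pi fun _ => μ, Function.Injective x := by
  classical
  have h_ne (i j : ι) (hij : i ≠ j) : ∀ᵐ x : ι → α ∂Measure.pi fun _ => μ, x i ≠ x j := by
    have h_meas : MeasurableSet {x : ι → α | x i = x j} :=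
      measurableSet_eq_fun (measurable_pi_apply i) (measurable_pi_apply j)
    have h_fiber (x : ι → α) : ∫⁻ a, {x : ι → α | x i = x j}.indicator 1
        (Function.update x i a) ∂μ = 0 := by
      rw [← measure_singleton (μ := μ) (x j), ← lintegral_indicator_one (measurableSet_singleton _)]
      simp [indicator_apply, Function.update_of_ne hij.symm]
    change Measure.pi (fun _ => μ) {x | ¬ (x i ≠ x j)} = 0
    simp_rw [not_not]
    rw [← lintegral_indicator_one h_meas]
    cases isEmpty_or_nonempty (ι → α) with
    | inl _ => exact lintegral_of_isEmpty _ _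
    | inr h =>
      rw [lintegral_eq_lmarginal_univ h.some, lmarginal_erase' _
        (measurable_one.indicator h_meas) (Finset.mem_univ i)]
      simp_rw [h_fiber]
      exact lintegral_zero
  have h_all := ae_all_iff.2 fun i => ae_all_iff.2 fun j => ae_all_iff.2 (h_ne i j)
  filter_upwards [h_all] with x hx i j hij
  exact not_ne_iff.1 fun h => hx i j h hij

end PiMeasure

section Symmetrization

theorem sum_perm_indicator_strictMono {α : Type*} [LinearOrder α] {n : ℕ}
    {f : (Fin n → α) → ℝ≥0∞}
    (hsymm : ∀ (σ : Equiv.Perm (Fin n)) x, f (x ∘ σ) = f x) {x : Fin n → α}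
    (hx : Function.Injective x) :
    ∑ σ : Equiv.Perm (Fin n), {x | StrictMono x}.indicator f (x ∘ σ) = f x := by
  rw [Finset.sum_eq_single_of_mem (Tuple.sort x) (Finset.mem_univ _), indicator_of_mem, hsymm]
  · exact (Tuple.monotone_sort x).strictMono_of_injective (hx.comp (Tuple.sort x).injective)
  · refine fun σ _ hσ => indicator_of_notMem (fun h => hσ (Equiv.ext fun i => hx ?_)) _
    exact congrFun (Tuple.unique_monotone h.monotone (Tuple.monotone_sort x)) i

variable {α : Type*} [LinearOrder α] [TopologicalSpace α] [OrderClosedTopology α]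
  [SecondCountableTopology α] [MeasurableSpace α] [OpensMeasurableSpace α]

theorem measurableSet_strictMono {ι : Type*} [Countable ι] [Preorder ι] :
    MeasurableSet {x : ι → α | StrictMono x} := by
  simp only [StrictMono, ofPred_forall]
  exact .iInter fun i => .iInter fun j => .iInter fun _ =>
    measurableSet_lt (measurable_pi_apply i) (measurable_pi_apply j)

theorem lintegral_pi_eq_factorial_mul (μ : Measure α) [SigmaFinite μ] [NullSingletonClass μ]
    {n : ℕ} {f : (Fin n → α) → ℝ≥0∞} (hf : Measurable f)
    (hsymm : ∀ (σ : Equiv.Perm (Fin n)) x, f (x ∘ σ) = f x) :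
    ∫⁻ x, f x ∂Measure.pi (fun _ => μ) =
      n.factorial * ∫⁻ x in {x | StrictMono x}, f x ∂Measure.pi fun _ => μ := by
  have : MeasurableEq α := ⟨isClosed_diagonal.measurableSet⟩
  have h_meas (σ : Equiv.Perm (Fin n)) :
      Measurable fun x => {x | StrictMono x}.indicator f (x ∘ σ) :=
    (hf.indicator measurableSet_strictMono).comp (by fun_prop)
  calc ∫⁻ x, f x ∂Measure.pi (fun _ => μ)
      = ∫⁻ x, ∑ σ : Equiv.Perm (Fin n), {x | StrictMono x}.indicator f (x ∘ σ)
          ∂Measure.pi fun _ => μ := by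
        refine lintegral_congr_ae ?_
        filter_upwards [ae_injective_pi μ] with x hx
        exact (sum_perm_indicator_strictMono hsymm hx).symm
    _ = n.factorial * ∫⁻ x in {x | StrictMono x}, f x ∂Measure.pi fun _ => μ := by
        rw [lintegral_finsetSum _ fun σ _ => h_meas σ]
        simp_rw [lintegral_pi_comp_perm μ _ ({x | StrictMono x}.indicator f),
          lintegral_indicator measurableSet_strictMono]
        simp [Fintype.card_perm]

theorem lintegral_pow_eq_factorial_mul (μ : Measure α) [SigmaFinite μ] [NullSingletonClass μ]
    {f : α → ℝ≥0∞} (hf : Measurable f) (n : ℕ) :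
    (∫⁻ x, f x ∂μ) ^ n = n.factorial *
      ∫⁻ x in {x : Fin n → α | StrictMono x}, ∏ i, f (x i) ∂Measure.pi fun _ => μ := by
  rw [← lintegral_pi_eq_factorial_mul μ (by fun_prop) fun σ x => Equiv.prod_comp σ fun i => f (x i),
    lintegral_fintype_prod_eq_prod _ fun _ => hf, Finset.prod_const, Finset.card_fin]

end Symmetrization

section BallAverages

theorem tendsto_setLAverage_closedBall {X : Type*} [PseudoMetricSpace X] [ProperSpace X]
    [MeasurableSpace X] [OpensMeasurableSpace X] (μ : Measure X) [μ.IsOpenPosMeasure]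
    [IsFiniteMeasureOnCompacts μ] {g : X → ℝ≥0∞} {a : X} (hg : ContinuousAt g a) :
    Tendsto (fun r => ⨍⁻ x in Metric.closedBall a r, g x ∂μ) (𝓝[>] 0) (𝓝 (g a)) := by
  have eventually_subset : ∀ U ∈ 𝓝 a, ∀ᶠ r in 𝓝[>] (0 : ℝ), Metric.closedBall a r ⊆ U := by
    intro U hU
    exact ((tendsto_closedBall_smallSets a).mono_left nhdsWithin_le_nhds).eventually
      (eventually_smallSets_subset.2 hU)
  have measure_ne_zero : ∀ r ∈ Ioi (0 : ℝ), μ (Metric.closedBall a r) ≠ 0 := fun r hr =>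
    (Metric.measure_closedBall_pos μ a hr).ne'
  have measure_ne_top : ∀ r, μ (Metric.closedBall a r) ≠ ∞ := fun r =>
    (isCompact_closedBall a r).measure_lt_top.ne
  refine tendsto_order.2 ⟨fun b hb => ?_, fun b hb => ?_⟩
  · obtain ⟨c, hbc, hc⟩ := exists_between hb
    filter_upwards [eventually_subset _ (hg.eventually_const_lt hc), self_mem_nhdsWithin]
      with r hr hr0
    calc b < c := hbc
      _ = ⨍⁻ _ in Metric.closedBall a r, c ∂μ :=
          (setLAverage_const (measure_ne_zero r hr0) (measure_ne_top r) c).symm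
      _ ≤ _ := by
          simp only [setLAverage_eq]
          gcongr ?_ / _
          exact setLIntegral_mono' measurableSet_closedBall fun x hx => (hr hx).le
  · obtain ⟨c, hc, hcb⟩ := exists_between hb
    filter_upwards [eventually_subset _ (hg.eventually_lt_const hc), self_mem_nhdsWithin]
      with r hr hr0
    calc _ ≤ ⨍⁻ _ in Metric.closedBall a r, c ∂μ := by
          simp only [setLAverage_eq]
          gcongr ?_ / _
          exact setLIntegral_mono' measurableSet_closedBall fun x hx => (hr hx).le
      _ = c := setLAverage_const (measure_ne_zero r hr0) (measure_ne_top r) c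
      _ < b := hcb

/-- The density of the uniform probability measure on the closed ball of radius `r` around `a`,
used as an approximate identity. -/
noncomputable def uniformBallPDF {X : Type*} [PseudoMetricSpace X] [MeasureSpace X] (a : X)
    (r : ℝ) : X → ℝ≥0∞ :=
  (Metric.closedBall a r).indicator fun _ => (volume (Metric.closedBall a r))⁻¹

theorem measurable_uniformBallPDF {X : Type*} [PseudoMetricSpace X] [MeasureSpace X]
    [OpensMeasurableSpace X] (a : X) (r : ℝ) : Measurable (uniformBallPDF a r) :=
  measurable_const.indicator measurableSet_closedBall

theorem lintegral_uniformBallPDF_mul {X : Type*} [PseudoMetricSpace X] [MeasureSpace X]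
    [OpensMeasurableSpace X] (a : X) (r : ℝ) {g : X → ℝ≥0∞} (hg : Measurable g) :
    ∫⁻ x, uniformBallPDF a r x * g x = ⨍⁻ x in Metric.closedBall a r, g x ∂volume := by
  simp_rw [uniformBallPDF, ← indicator_mul_left (Metric.closedBall a r)]
  rw [lintegral_indicator measurableSet_closedBall, lintegral_const_mul _ hg, setLAverage_eq,
    ENNReal.div_eq_inv_mul]

theorem prod_uniformBallPDF {ι : Type*} [Fintype ι] (a : ι → ℝ) {r : ℝ} (hr : 0 < r)
    (x : ι → ℝ) : ∏ i, uniformBallPDF (a i) r (x i) = uniformBallPDF a r x := by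
  have volume_closedBall : (volume (Metric.closedBall a r))⁻¹
      = ∏ i, (volume (Metric.closedBall (a i) r))⁻¹ := by
    rw [closedBall_pi a hr.le, volume_pi_pi, ENNReal.prod_inv_distrib]
    intro i _ j _ _
    exact .inr (isCompact_closedBall _ _).measure_lt_top.ne
  by_cases hx : x ∈ Metric.closedBall a r
  · rw [uniformBallPDF, indicator_of_mem hx, volume_closedBall]
    rw [closedBall_pi a hr.le] at hx
    exact Finset.prod_congr rfl fun i _ => indicator_of_mem (hx i (mem_univ i)) _
  · rw [uniformBallPDF, indicator_of_notMem hx]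
    rw [closedBall_pi a hr.le, mem_univ_pi, not_forall] at hx
    obtain ⟨i, hi⟩ := hx
    exact Finset.prod_eq_zero (Finset.mem_univ i) (indicator_of_notMem hi _)

end BallAverages

section ConvergenceOfMoments

variable {Ω ι : Type*} [MeasurableSpace Ω] {P : Measure Ω} {l : Filter ι}
  {Z : ι → Ω → ℝ≥0∞} {W : Ω → ℝ≥0∞}

theorem pow_le_min_pow_add_pow_succ_div (z : ℝ≥0∞) {N : ℝ≥0∞} (hN₀ : N ≠ 0) (hN : N ≠ ∞) (k : ℕ) :
    z ^ k ≤ min z N ^ k + z ^ (k + 1) / N := by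
  rcases le_total z N with h | h
  · rw [min_eq_left h]
    exact le_self_add
  · refine le_trans ?_ le_add_self
    rw [ENNReal.le_div_iff_mul_le (.inl hN₀) (.inl hN), pow_succ]
    gcongr

theorem lintegral_pow_le_liminf_of_ae_tendsto [l.IsCountablyGenerated]
    (hZ : ∀ i, AEMeasurable (Z i) P) (hlim : ∀ᵐ ω ∂P, Tendsto (fun i => Z i ω) l (𝓝 (W ω)))
    [l.NeBot] (k : ℕ) :
    ∫⁻ ω, W ω ^ k ∂P ≤ liminf (fun i => ∫⁻ ω, Z i ω ^ k ∂P) l := by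
  have h : ∀ᵐ ω ∂P, W ω ^ k = liminf (fun i => Z i ω ^ k) l := by
    filter_upwards [hlim] with ω hω
    exact (((ENNReal.continuous_pow k).tendsto _).comp hω).liminf_eq.symm
  rw [lintegral_congr_ae h]
  exact lintegral_liminf_le' fun i => (hZ i).pow_const k

theorem limsup_lintegral_pow_le_of_ae_tendsto [IsFiniteMeasure P] [l.IsCountablyGenerated]
    [l.NeBot] (hZ : ∀ i, AEMeasurable (Z i) P)
    (hlim : ∀ᵐ ω ∂P, Tendsto (fun i => Z i ω) l (𝓝 (W ω))) (k : ℕ) {C : ℝ≥0∞} (hC : C ≠ ∞)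
    (hbound : ∀ᶠ i in l, ∫⁻ ω, Z i ω ^ (k + 1) ∂P ≤ C) :
    limsup (fun i => ∫⁻ ω, Z i ω ^ k ∂P) l ≤ ∫⁻ ω, W ω ^ k ∂P := by
  have le_add : ∀ N : ℝ≥0, N ≠ 0 →
      limsup (fun i => ∫⁻ ω, Z i ω ^ k ∂P) l ≤ ∫⁻ ω, W ω ^ k ∂P + C / N := by
    intro N hN
    have tendsto_truncated : Tendsto (fun i => ∫⁻ ω, min (Z i ω) N ^ k ∂P) l
        (𝓝 (∫⁻ ω, min (W ω) N ^ k ∂P)) := by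
      refine tendsto_lintegral_filter_of_dominated_convergence' (fun _ => (N : ℝ≥0∞) ^ k)
        (.of_forall fun i => ((hZ i).min aemeasurable_const).pow_const k)
        (.of_forall fun i => .of_forall fun ω => by gcongr; exact min_le_right _ _)
        (by simp [ENNReal.mul_eq_top]) ?_
      filter_upwards [hlim] with ω hω
      exact ((ENNReal.continuous_pow k).tendsto _).comp (hω.min tendsto_const_nhds)
    calc limsup (fun i => ∫⁻ ω, Z i ω ^ k ∂P) l
        ≤ limsup (fun i => ∫⁻ ω, min (Z i ω) N ^ k ∂P + C / N) l := by
          refine limsup_le_limsup (hbound.mono fun i hi => ?_)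
          calc ∫⁻ ω, Z i ω ^ k ∂P
              ≤ ∫⁻ ω, min (Z i ω) N ^ k + Z i ω ^ (k + 1) / N ∂P :=
                lintegral_mono fun ω => pow_le_min_pow_add_pow_succ_div _
                  (ENNReal.coe_ne_zero.2 hN) ENNReal.coe_ne_top k
            _ = ∫⁻ ω, min (Z i ω) N ^ k ∂P + (∫⁻ ω, Z i ω ^ (k + 1) ∂P) / N := by
                rw [lintegral_add_left' (((hZ i).min aemeasurable_const).pow_const k)]
                simp_rw [div_eq_mul_inv]
                rw [lintegral_mul_const'' _ ((hZ i).pow_const _)]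
            _ ≤ ∫⁻ ω, min (Z i ω) N ^ k ∂P + C / N := by gcongr
      _ = ∫⁻ ω, min (W ω) N ^ k ∂P + C / N := (tendsto_truncated.add_const _).limsup_eq
      _ ≤ ∫⁻ ω, W ω ^ k ∂P + C / N := by
          gcongr
          exact min_le_left _ _
  have tendsto_add : Tendsto (fun n : ℕ => ∫⁻ ω, W ω ^ k ∂P + C / n) atTop
      (𝓝 (∫⁻ ω, W ω ^ k ∂P)) := by
    simpa using (ENNReal.Tendsto.const_div ENNReal.tendsto_nat_nhds_top (.inr hC)).const_add
      (∫⁻ ω, W ω ^ k ∂P)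
  refine ge_of_tendsto tendsto_add ((eventually_ne_atTop 0).mono fun n hn => ?_)
  exact_mod_cast le_add n (by exact_mod_cast hn)

theorem tendsto_lintegral_pow_of_ae_tendsto [IsFiniteMeasure P] [l.IsCountablyGenerated]
    [l.NeBot] (hZ : ∀ i, AEMeasurable (Z i) P)
    (hlim : ∀ᵐ ω ∂P, Tendsto (fun i => Z i ω) l (𝓝 (W ω))) (k : ℕ) {C : ℝ≥0∞} (hC : C ≠ ∞)
    (hbound : ∀ᶠ i in l, ∫⁻ ω, Z i ω ^ (k + 1) ∂P ≤ C) :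
    Tendsto (fun i => ∫⁻ ω, Z i ω ^ k ∂P) l (𝓝 (∫⁻ ω, W ω ^ k ∂P)) :=
  tendsto_of_le_liminf_of_limsup_le (lintegral_pow_le_liminf_of_ae_tendsto hZ hlim k)
    (limsup_lintegral_pow_le_of_ae_tendsto hZ hlim k hC hbound)

end ConvergenceOfMoments

section MomentsOfTimeIntegrals

variable {Ω : Type*} [MeasurableSpace Ω] {P : Measure Ω}

theorem exists_measurable_uncurry_of_ae_continuous {ι E : Type*} [TopologicalSpace ι]
    [TopologicalSpace.MetrizableSpace ι] [MeasurableSpace ι] [SecondCountableTopology ι]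
    [OpensMeasurableSpace ι] [TopologicalSpace E] [TopologicalSpace.PseudoMetrizableSpace E]
    [MeasurableSpace E] [BorelSpace E] [Nonempty E] {X : ι → Ω → E} (hX : ∀ t, Measurable (X t))
    (hcont : ∀ᵐ ω ∂P, Continuous fun t => X t ω) :
    ∃ Y : ι → Ω → E, Measurable (Function.uncurry Y) ∧ ∀ᵐ ω ∂P, ∀ t, Y t ω = X t ω := by
  classical
  obtain ⟨x₀⟩ := ‹Nonempty E›
  set N := toMeasurable P {ω | ¬Continuous fun t => X t ω}
  have measurableSet_N : MeasurableSet N := measurableSet_toMeasurable _ _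
  have measure_N : P N = 0 := by rw [measure_toMeasurable]; exact hcont
  refine ⟨fun t ω => if ω ∈ N then x₀ else X t ω,
    measurable_uncurry_of_continuous_of_measurable (fun ω => ?_)
      fun t => Measurable.ite measurableSet_N measurable_const (hX t), ?_⟩
  · by_cases hω : ω ∈ N
    · simp only [hω, if_true]
      exact continuous_const
    · simp only [hω, if_false]
      by_contra h
      exact hω (subset_toMeasurable P _ h)
  · filter_upwards [measure_eq_zero_iff_ae_notMem.1 measure_N] with ω hω t
    exact if_neg hω

theorem lintegral_lintegral_pow_eq_factorial_mul {α : Type*} [MeasurableSpace α] [LinearOrder α]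
    [TopologicalSpace α] [OrderClosedTopology α] [SecondCountableTopology α]
    [OpensMeasurableSpace α] [SFinite P] (μ : Measure α) [SigmaFinite μ] [NullSingletonClass μ]
    {g : α → Ω → ℝ≥0∞} (hg : Measurable (Function.uncurry g)) (n : ℕ) :
    ∫⁻ ω, (∫⁻ r, g r ω ∂μ) ^ n ∂P = n.factorial *
      ∫⁻ s in {s : Fin n → α | StrictMono s}, ∫⁻ ω, ∏ i, g (s i) ω ∂P ∂Measure.pi fun _ => μ := by
  have measurable_prod : Measurable fun p : Ω × (Fin n → α) => ∏ i, g (p.2 i) p.1 :=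
    Finset.measurable_fun_prod _ fun i _ => hg.comp (by fun_prop : Measurable fun
      p : Ω × (Fin n → α) => (p.2 i, p.1))
  simp_rw [lintegral_pow_eq_factorial_mul μ hg.of_uncurry_right n]
  rw [lintegral_const_mul' _ _ (ENNReal.natCast_ne_top _),
    lintegral_lintegral_swap measurable_prod.aemeasurable]

/-- The simplex `0 < s₁ < ⋯ < sₙ < 1` of ordered sampling times. -/
def timeSimplex (n : ℕ) : Set (Fin n → ℝ) :=
  {s | StrictMono s} ∩ univ.pi fun _ => Ioo 0 1

theorem measurableSet_timeSimplex (n : ℕ) : MeasurableSet (timeSimplex n) :=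
  measurableSet_strictMono.inter (.univ_pi fun _ => measurableSet_Ioo)

theorem restrict_pi_restrict_Icc (n : ℕ) :
    (Measure.pi fun _ : Fin n => volume.restrict (Icc (0 : ℝ) 1)).restrict {s | StrictMono s}
      = volume.restrict (timeSimplex n) := by
  rw [← restrict_Ioo_eq_restrict_Icc, ← Measure.restrict_pi_pi,
    Measure.restrict_restrict measurableSet_strictMono, ← volume_pi, timeSimplex]

variable {E : Type*} [TopologicalSpace E] [TopologicalSpace.PseudoMetrizableSpace E]
  [MeasurableSpace E] [BorelSpace E] [Nonempty E] {X : ℝ → Ω → E} {f : E → ℝ≥0∞}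

theorem aemeasurable_lintegral_comp_of_ae_continuous (hX : ∀ t, Measurable (X t))
    (hcont : ∀ᵐ ω ∂P, Continuous fun t => X t ω) (hf : Measurable f) (μ : Measure ℝ) [SFinite μ] :
    AEMeasurable (fun ω => ∫⁻ r, f (X r ω) ∂μ) P := by
  obtain ⟨Y, hY, hYX⟩ := exists_measurable_uncurry_of_ae_continuous hX hcont
  refine ⟨fun ω => ∫⁻ r, f (Y r ω) ∂μ, (hf.comp hY).lintegral_prod_left', ?_⟩
  filter_upwards [hYX] with ω hω
  simp [hω]

theorem lintegral_setLIntegral_Icc_pow_eq [SFinite P] (hX : ∀ t, Measurable (X t))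
    (hcont : ∀ᵐ ω ∂P, Continuous fun t => X t ω) (hf : Measurable f) (n : ℕ) :
    ∫⁻ ω, (∫⁻ r in Icc (0 : ℝ) 1, f (X r ω)) ^ n ∂P =
      n.factorial * ∫⁻ s in timeSimplex n, ∫⁻ ω, ∏ i, f (X (s i) ω) ∂P := by
  obtain ⟨Y, hY, hYX⟩ := exists_measurable_uncurry_of_ae_continuous hX hcont
  calc ∫⁻ ω, (∫⁻ r in Icc (0 : ℝ) 1, f (X r ω)) ^ n ∂P
      = ∫⁻ ω, (∫⁻ r in Icc (0 : ℝ) 1, f (Y r ω)) ^ n ∂P := by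
        refine lintegral_congr_ae ?_
        filter_upwards [hYX] with ω hω
        simp only [hω]
    _ = n.factorial * ∫⁻ s in timeSimplex n, ∫⁻ ω, ∏ i, f (Y (s i) ω) ∂P := by
        rw [lintegral_lintegral_pow_eq_factorial_mul (g := fun r ω => f (Y r ω)) _ (hf.comp hY),
          restrict_pi_restrict_Icc]
    _ = _ := by
        congr 1
        refine lintegral_congr fun s => lintegral_congr_ae ?_
        filter_upwards [hYX] with ω hω
        simp only [hω]

end MomentsOfTimeIntegrals

section Increments

/-- The increments `x₁ - 0, x₂ - x₁, …, xₙ - xₙ₋₁` of a sequence started at `0`, as a linear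
map. -/
noncomputable def increments (n : ℕ) : (Fin n → ℝ) →ₗ[ℝ] Fin n → ℝ :=
  LinearMap.pi fun j => LinearMap.proj j -
    Fin.cases (motive := fun _ => (Fin n → ℝ) →ₗ[ℝ] ℝ) 0 LinearMap.proj j.castSucc

variable {n : ℕ}

theorem increments_apply (x : Fin n → ℝ) (j : Fin n) :
    increments n x j =
      (Fin.cons 0 x : Fin (n + 1) → ℝ) j.succ - (Fin.cons 0 x : Fin (n + 1) → ℝ) j.castSucc := by
  cases n with
  | zero => exact j.elim0
  | succ n => cases j using Fin.cases <;> simp [increments]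

theorem sum_increments (x : Fin (n + 1) → ℝ) : ∑ j, increments (n + 1) x j = x (Fin.last n) := by
  have h_succ := Fin.sum_univ_succ (Fin.cons 0 x : Fin (n + 2) → ℝ)
  rw [Fin.sum_univ_castSucc] at h_succ
  simp only [increments_apply, Finset.sum_sub_distrib]
  rw [← Fin.succ_last, Fin.cons_succ, Fin.cons_zero] at h_succ
  linarith

theorem increments_snoc (x : Fin n → ℝ) (u : ℝ) :
    increments (n + 1) (Fin.snoc x u) =
      Fin.snoc (increments n x) (u - (Fin.cons 0 x : Fin (n + 1) → ℝ) (Fin.last n)) := by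
  ext j
  rw [increments_apply, Fin.cons_snoc_eq_snoc_cons]
  cases j using Fin.lastCases with
  | last => simp
  | cast j => simp [increments_apply, -Fin.castSucc_succ, Fin.succ_castSucc]

theorem det_increments : LinearMap.det (increments n) = 1 := by
  rw [← LinearMap.det_toMatrix', Matrix.det_of_isLowerTriangular]
  · refine Finset.prod_eq_one fun i _ => ?_
    rw [LinearMap.toMatrix'_apply, increments_apply]
    cases n with
    | zero => exact i.elim0
    | succ n => cases i using Fin.cases <;> simp [Fin.ext_iff]
  · intro i j hij
    rw [LinearMap.toMatrix'_apply, increments_apply]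
    have hij' : i < j := hij
    cases n with
    | zero => exact i.elim0
    | succ n =>
      cases i using Fin.cases with
      | zero => simp [hij'.ne]
      | succ i => simp [hij'.ne, (Fin.castSucc_lt_succ.trans hij').ne]

theorem measurableEmbedding_increments : MeasurableEmbedding (increments n) := by
  refine (LinearMap.continuous_of_finiteDimensional _).measurableEmbedding ?_
  exact (LinearMap.equivOfDetNeZero (increments n) (by simp [det_increments])).injective

theorem measurePreserving_increments : MeasurePreserving (increments n) := by
  refine ⟨measurableEmbedding_increments.measurable, ?_⟩
  rw [Real.map_linearMap_volume_pi_eq_smul_volume_pi (by simp [det_increments]), det_increments]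
  simp

end Increments

variable {n : ℕ}

theorem lintegral_fin_succ_eq_lintegral_snoc {f : (Fin (n + 1) → ℝ) → ℝ≥0∞} (hf : Measurable f) :
    ∫⁻ x, f x = ∫⁻ b, ∫⁻ x : Fin n → ℝ, f (Fin.snoc x b) := by
  rw [← (volume_preserving_piFinSuccAbove (fun _ => ℝ) (Fin.last n)).symm.lintegral_comp hf,
    Measure.volume_eq_prod,
    lintegral_prod _ (by fun_prop)]
  simp [MeasurableEquiv.piFinSuccAbove, Fin.snocEquiv]

theorem map_eq_withDensity_of_map_comp {Ω α β : Type*} [MeasurableSpace Ω] [MeasurableSpace α]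
    [MeasurableSpace β] {P : Measure Ω} {μ : Measure α} {ν : Measure β} {φ : α → β}
    (hφ : MeasurableEmbedding φ) (hμν : MeasurePreserving φ μ ν) {X : Ω → α} (hX : Measurable X)
    {f : β → ℝ≥0∞} (hf : P.map (fun ω => φ (X ω)) = ν.withDensity f) :
    P.map X = μ.withDensity fun x => f (φ x) := by
  ext s hs
  have measurableSet_image : MeasurableSet (φ '' s) := hφ.measurableSet_image.2 hs
  calc P.map X s = P.map (fun ω => φ (X ω)) (φ '' s) := by
        rw [Measure.map_apply hX hs,
          Measure.map_apply (hφ.measurable.fun_comp hX) measurableSet_image]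
        congr 1
        ext ω
        exact (hφ.injective.mem_set_image).symm
    _ = ∫⁻ x in s, f (φ x) ∂μ := by
        rw [hf, withDensity_apply _ measurableSet_image, hμν.setLIntegral_comp_emb hφ]
    _ = _ := (withDensity_apply _ hs).symm

theorem gaussianPDF_zero_add_mul (v : ℝ≥0) (x b : ℝ) :
    gaussianPDF 0 v (x + b * v) =
      gaussianPDF 0 v x * ENNReal.ofReal (Real.exp (-b * x - b ^ 2 / 2 * v)) := by
  rcases eq_or_ne v 0 with rfl | hv
  · simp
  · rw [gaussianPDF, gaussianPDF, ← ENNReal.ofReal_mul (gaussianPDFReal_nonneg 0 v x),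
      gaussianPDFReal, gaussianPDFReal, mul_assoc _ (Real.exp _), ← Real.exp_add]
    congr 3
    field_simp
    ring

theorem gaussianPDF_le_gaussianPDF_self (μ : ℝ) (v : ℝ≥0) (x : ℝ) :
    gaussianPDF μ v x ≤ gaussianPDF μ v μ := by
  rw [gaussianPDF, gaussianPDF, gaussianPDFReal, gaussianPDFReal]
  gcongr ENNReal.ofReal (_ * Real.exp ?_)
  rw [sub_self, zero_pow two_ne_zero, neg_zero, zero_div]
  exact div_nonpos_of_nonpos_of_nonneg (neg_nonpos.2 (sq_nonneg _)) (by positivity)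

theorem continuous_gaussianPDFReal (μ : ℝ) (v : ℝ≥0) : Continuous (gaussianPDFReal μ v) := by
  unfold gaussianPDFReal
  fun_prop

section BrownianPDF

/-- The joint density of the values of a standard Brownian motion at the times `t`. -/
noncomputable def brownianPDF (t x : Fin n → ℝ) : ℝ≥0∞ :=
  ∏ j, gaussianPDF 0 (increments n t j).toNNReal (increments n x j)

theorem measurable_uncurry_brownianPDF :
    Measurable (Function.uncurry (brownianPDF (n := n))) := by
  have measurable_increments : Measurable (increments n) :=
    measurableEmbedding_increments.measurable
  simp only [Function.uncurry_def, brownianPDF]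
  exact Finset.measurable_fun_prod _ fun j _ => measurable_uncurry_gaussianPDF.comp
    (by fun_prop : Measurable fun p : (Fin n → ℝ) × (Fin n → ℝ) =>
      ((0 : ℝ), (increments n p.1 j).toNNReal, increments n p.2 j))

theorem measurable_brownianPDF (t : Fin n → ℝ) : Measurable (brownianPDF t) :=
  measurable_uncurry_brownianPDF.of_uncurry_left

theorem continuous_brownianPDF (t : Fin n → ℝ) : Continuous (brownianPDF t) := by
  unfold brownianPDF gaussianPDF
  simp_rw [← ENNReal.ofReal_prod_of_nonneg fun _ _ => gaussianPDFReal_nonneg _ _ _]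
  have continuous_increments : Continuous (increments n) :=
    LinearMap.continuous_of_finiteDimensional _
  refine ENNReal.continuous_ofReal.comp (continuous_finsetProd _ fun j _ => ?_)
  exact (continuous_gaussianPDFReal _ _).comp (by fun_prop)

theorem brownianPDF_le_brownianPDF_zero (t x : Fin n → ℝ) : brownianPDF t x ≤ brownianPDF t 0 := by
  simp only [brownianPDF, map_zero]
  gcongr
  exact gaussianPDF_le_gaussianPDF_self _ _ _

theorem brownianPDF_add_smul {t : Fin (n + 1) → ℝ} (ht : ∀ j, 0 ≤ increments (n + 1) t j)
    (x : Fin (n + 1) → ℝ) (b : ℝ) :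
    brownianPDF t (x + b • t) = brownianPDF t x *
      ENNReal.ofReal (Real.exp (-b * x (Fin.last n) - b ^ 2 / 2 * t (Fin.last n))) := by
  have hj (j : Fin (n + 1)) := gaussianPDF_zero_add_mul (increments (n + 1) t j).toNNReal
    (increments (n + 1) x j) b
  simp only [Real.coe_toNNReal _ (ht _)] at hj
  simp only [brownianPDF, map_add, map_smul, Pi.add_apply, Pi.smul_apply, smul_eq_mul, hj,
    Finset.prod_mul_distrib, ← ENNReal.ofReal_prod_of_nonneg fun _ _ => (Real.exp_pos _).le,
    ← Real.exp_sum, Finset.sum_sub_distrib, ← Finset.mul_sum, sum_increments]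

theorem monotone_cons_zero {t : Fin n → ℝ} (ht : ∀ j, 0 ≤ increments n t j) :
    Monotone (Fin.cons 0 t : Fin (n + 1) → ℝ) :=
  Fin.monotone_iff_le_succ.2 fun j => sub_nonneg.1 (increments_apply t j ▸ ht j)

variable {Ω : Type} [MeasurableSpace Ω] {P : Measure Ω} {B : ℝ → Ω → ℝ}

theorem IsBrownianMotion.map_increments_eq_withDensity (hB : IsBrownianMotion P B)
    {t : Fin n → ℝ} (ht : ∀ j, 0 < increments n t j) :
    P.map (fun ω => increments n fun i => B (t i) ω) = volume.withDensity fun x =>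
      ∏ j, gaussianPDF 0 (increments n t j).toNNReal (x j) := by
  have := hB.isProb
  have hmono := monotone_cons_zero fun j => (ht j).le
  set τ : Fin (n + 1) → ℝ := Fin.cons 0 t with hτ
  have τ_nonneg (i : Fin (n + 1)) : 0 ≤ τ i := hmono (Fin.zero_le i)
  have increments_ae_eq : (fun ω => increments n fun i => B (t i) ω) =ᵐ[P]
      fun ω j => B (τ j.succ) ω - B (τ j.castSucc) ω := by
    filter_upwards [hB.start] with ω hω
    have h_cons (i : Fin (n + 1)) :
        (Fin.cons 0 fun i => B (t i) ω : Fin (n + 1) → ℝ) i = B (τ i) ω := by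
      cases i using Fin.cases <;> simp [hτ, hω]
    ext j
    simp only [increments_apply, h_cons]
  have map_increment (j : Fin n) : P.map (B (τ j.succ) - B (τ j.castSucc)) =
      volume.withDensity (gaussianPDF 0 (increments n t j).toNNReal) := by
    rw [← gaussianReal_of_var_ne_zero _ (by simpa using ht j), increments_apply]
    exact hB.incr _ _ (τ_nonneg _) (hmono Fin.castSucc_lt_succ.le)
  have (j : Fin n) : SigmaFinite ((volume : Measure ℝ).withDensity
      (gaussianPDF 0 (increments n t j).toNNReal)) := by
    rw [← map_increment j]
    infer_instance
  rw [Measure.map_congr increments_ae_eq, volume_pi,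
    ← pi_withDensity _ fun j => measurable_gaussianPDF 0 _]
  simp only [← map_increment]
  exact (iIndepFun_iff_map_fun_eq_pi_map fun j =>
    ((hB.meas _).sub (hB.meas _)).aemeasurable).1 (hB.indep n τ hmono (τ_nonneg 0))

theorem IsBrownianMotion.map_eq_withDensity (hB : IsBrownianMotion P B) {t : Fin n → ℝ}
    (ht : ∀ j, 0 < increments n t j) :
    P.map (fun ω i => B (t i) ω) = volume.withDensity (brownianPDF t) :=
  map_eq_withDensity_of_map_comp measurableEmbedding_increments measurePreserving_increments
    (measurable_pi_lambda _ fun i => hB.meas (t i))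
    (f := fun x => ∏ j, gaussianPDF 0 (increments n t j).toNNReal (x j))
    (hB.map_increments_eq_withDensity ht)

end BrownianPDF

section BridgePDF

variable {n : ℕ}

theorem increments_pos {t : Fin n → ℝ} (ht : StrictMono t) (ht₀ : ∀ i, 0 < t i) (j : Fin n) :
    0 < increments n t j := by
  rw [increments_apply, sub_pos]
  cases n with
  | zero => exact j.elim0
  | succ n =>
    cases j using Fin.cases with
    | zero => simpa using ht₀ 0
    | succ j => simpa using ht Fin.castSucc_lt_succ

theorem increments_snoc_one_pos {s : Fin n → ℝ} (hs : s ∈ timeSimplex n) (j : Fin (n + 1)) :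
    0 < increments (n + 1) (Fin.snoc s 1) j := by
  obtain ⟨s_strictMono, s_mem_Ioo⟩ := hs
  rw [increments_snoc]
  cases j using Fin.lastCases with
  | last =>
    rw [Fin.snoc_last, sub_pos]
    generalize Fin.last n = i
    cases i using Fin.cases with
    | zero => simp
    | succ i => simpa using (s_mem_Ioo i (mem_univ i)).2
  | cast j =>
    rw [Fin.snoc_castSucc]
    exact increments_pos s_strictMono (fun i => (s_mem_Ioo i (mem_univ i)).1) j

/-- The joint density of the values of a standard Brownian bridge at the times `s`, obtained by
conditioning a Brownian motion to vanish at time `1`. -/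
noncomputable def bridgePDF (s z : Fin n → ℝ) : ℝ≥0∞ :=
  brownianPDF (Fin.snoc s 1) (Fin.snoc z 0) / gaussianPDF 0 1 0

theorem gaussianPDF_zero_one_zero_ne_zero : gaussianPDF 0 1 0 ≠ 0 :=
  (gaussianPDF_pos 0 one_ne_zero 0).ne'

theorem measurable_uncurry_bridgePDF : Measurable (Function.uncurry (bridgePDF (n := n))) :=
  (measurable_uncurry_brownianPDF.comp (by fun_prop : Measurable
    fun p : (Fin n → ℝ) × (Fin n → ℝ) => ((Fin.snoc p.1 1 : Fin (n + 1) → ℝ),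
      (Fin.snoc p.2 0 : Fin (n + 1) → ℝ)))).div_const _

theorem measurable_bridgePDF (s : Fin n → ℝ) : Measurable (bridgePDF s) :=
  measurable_uncurry_bridgePDF.of_uncurry_left

theorem continuous_bridgePDF (s : Fin n → ℝ) : Continuous (bridgePDF s) :=
  (ENNReal.continuous_div_const _ gaussianPDF_zero_one_zero_ne_zero).comp
    ((continuous_brownianPDF _).comp (by fun_prop : Continuous
      fun z : Fin n → ℝ => (Fin.snoc z 0 : Fin (n + 1) → ℝ)))

theorem snoc_zero_eq_zero : (Fin.snoc (0 : Fin n → ℝ) 0 : Fin (n + 1) → ℝ) = 0 := by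
  ext j
  cases j using Fin.lastCases <;> simp

theorem bridgePDF_le_bridgePDF_zero (s z : Fin n → ℝ) : bridgePDF s z ≤ bridgePDF s 0 := by
  rw [bridgePDF, bridgePDF, snoc_zero_eq_zero]
  gcongr
  exact brownianPDF_le_brownianPDF_zero _ _

theorem brownianPDF_snoc_eq_bridgePDF_mul {s : Fin n → ℝ} (hs : s ∈ timeSimplex n)
    (z : Fin n → ℝ) (b : ℝ) :
    brownianPDF (Fin.snoc s 1) (Fin.snoc (z + b • s) b) = bridgePDF s z * gaussianPDF 0 1 b := by
  have snoc_eq : (Fin.snoc (z + b • s) b : Fin (n + 1) → ℝ) =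
      Fin.snoc z 0 + b • (Fin.snoc s 1 : Fin (n + 1) → ℝ) := by
    ext j
    cases j using Fin.lastCases <;> simp
  have gaussianPDF_eq := gaussianPDF_zero_add_mul 1 0 b
  simp only [zero_add, NNReal.coe_one, mul_one, mul_zero, zero_sub] at gaussianPDF_eq
  rw [snoc_eq, brownianPDF_add_smul fun j => (increments_snoc_one_pos hs j).le, gaussianPDF_eq,
    bridgePDF, Fin.snoc_last, Fin.snoc_last, mul_zero, zero_sub, mul_one, ← mul_assoc,
    ENNReal.div_mul_cancel gaussianPDF_zero_one_zero_ne_zero gaussianPDF_ne_top]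

end BridgePDF

section Bridge

/-- The bridge from `0` to `y` over `[0, 1]` obtained from the path `B` by adding a linear drift. -/
def bridge {Ω : Type*} (B : ℝ → Ω → ℝ) (y t : ℝ) (ω : Ω) : ℝ := B t ω - t * B 1 ω + t * y

theorem bridge_zero {Ω : Type*} (B : ℝ → Ω → ℝ) : bridge B 0 = fun t ω => B t ω - t * B 1 ω := by
  ext t ω
  rw [bridge, mul_zero, add_zero]

variable {Ω : Type} [MeasurableSpace Ω] {P : Measure Ω} {B : ℝ → Ω → ℝ} {n : ℕ}

theorem IsBrownianMotion.lintegral_bridge_zero (hB : IsBrownianMotion P B) {s : Fin n → ℝ}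
    (hs : s ∈ timeSimplex n) {F : (Fin n → ℝ) → ℝ≥0∞} (hF : Measurable F) :
    ∫⁻ ω, F (fun i => bridge B 0 (s i) ω) ∂P = ∫⁻ z, F z * bridgePDF s z := by
  set t : Fin (n + 1) → ℝ := Fin.snoc s 1 with ht
  have measurable_F : Measurable fun x : Fin (n + 1) → ℝ =>
      F (fun i => x i.castSucc - s i * x (Fin.last n)) :=
    hF.comp (by fun_prop)
  calc ∫⁻ ω, F (fun i => bridge B 0 (s i) ω) ∂P
      = ∫⁻ x, F (fun i => x i.castSucc - s i * x (Fin.last n)) ∂P.map fun ω i => B (t i) ω := by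
        rw [lintegral_map measurable_F (measurable_pi_lambda _ fun i => hB.meas _)]
        simp [bridge, ht]
    _ = ∫⁻ x, brownianPDF t x * F (fun i => x i.castSucc - s i * x (Fin.last n)) := by
        rw [hB.map_eq_withDensity (increments_snoc_one_pos hs),
          lintegral_withDensity_eq_lintegral_mul _ (measurable_brownianPDF _) measurable_F]
        rfl
    _ = ∫⁻ b, ∫⁻ x : Fin n → ℝ, brownianPDF t (Fin.snoc x b) * F (x - b • s) := by
        rw [lintegral_fin_succ_eq_lintegral_snoc (f := fun x => brownianPDF t x * F _)
          ((measurable_brownianPDF t).mul measurable_F)]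
        simp only [Fin.snoc_castSucc, Fin.snoc_last]
        congr! with b x i
        simp [mul_comm]
    _ = ∫⁻ b, ∫⁻ z : Fin n → ℝ, F z * bridgePDF s z * gaussianPDF 0 1 b := by
        refine lintegral_congr fun b => ?_
        rw [← lintegral_add_right_eq_self _ (b • s)]
        simp only [add_sub_cancel_right, ht, brownianPDF_snoc_eq_bridgePDF_mul hs]
        exact lintegral_congr fun z => by ring
    _ = ∫⁻ z, F z * bridgePDF s z := by
        have measurable_mul : Measurable fun z => F z * bridgePDF s z :=
          hF.mul (measurable_bridgePDF s)
        simp_rw [lintegral_mul_const _ measurable_mul]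
        rw [lintegral_const_mul _ (measurable_gaussianPDF 0 1),
          lintegral_gaussianPDF_eq_one 0 one_ne_zero, mul_one]

theorem IsBrownianMotion.lintegral_bridge (hB : IsBrownianMotion P B) (y : ℝ) {s : Fin n → ℝ}
    (hs : s ∈ timeSimplex n) {F : (Fin n → ℝ) → ℝ≥0∞} (hF : Measurable F) :
    ∫⁻ ω, F (fun i => bridge B y (s i) ω) ∂P = ∫⁻ z, F z * bridgePDF s (z - y • s) := by
  have bridge_eq (ω : Ω) : (fun i => bridge B y (s i) ω) =
      (fun i => bridge B 0 (s i) ω) + y • s := by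
    ext i
    simp [bridge, mul_comm]
  simp_rw [bridge_eq]
  rw [hB.lintegral_bridge_zero hs (F := fun z => F (z + y • s)) (hF.comp (by fun_prop)),
    ← lintegral_add_right_eq_self (fun z => F z * bridgePDF s (z - y • s)) (y • s)]
  simp only [add_sub_cancel_right]

theorem IsBrownianMotion.measurable_bridge (hB : IsBrownianMotion P B) (y t : ℝ) :
    Measurable (bridge B y t) :=
  ((hB.meas t).sub ((hB.meas 1).const_mul t)).add_const _

theorem IsBrownianMotion.ae_continuous_bridge (hB : IsBrownianMotion P B) (y : ℝ) :
    ∀ᵐ ω ∂P, Continuous fun t => bridge B y t ω := by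
  filter_upwards [hB.cont] with ω hω
  unfold bridge
  fun_prop

end Bridge

section Integrability

theorem setLIntegral_Iic_inv_sqrt_ne_top :
    ∫⁻ x in Iic (1 : ℝ), ENNReal.ofReal (√x)⁻¹ ≠ ∞ := by
  have integrableOn_rpow : IntegrableOn (fun x : ℝ => x ^ (-(1 / 2) : ℝ)) (Ioc 0 1) :=
    (intervalIntegrable_iff_integrableOn_Ioc_of_le zero_le_one).1
      (intervalIntegral.intervalIntegrable_rpow' (by norm_num))
  have lintegral_Iic : ∫⁻ x in Iic (0 : ℝ), ENNReal.ofReal (√x)⁻¹ = 0 :=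
    setLIntegral_eq_zero measurableSet_Iic fun x hx => by
      simp [Real.sqrt_eq_zero_of_nonpos (mem_Iic.1 hx)]
  have lintegral_Ioc : ∫⁻ x in Ioc (0 : ℝ) 1, ENNReal.ofReal (√x)⁻¹ ≠ ∞ := by
    rw [setLIntegral_congr_fun measurableSet_Ioc fun x hx => by
      rw [Real.sqrt_eq_rpow, ← Real.rpow_neg hx.1.le]]
    exact integrableOn_rpow.lintegral_lt_top.ne
  rw [← Iic_union_Ioc_eq_Iic zero_le_one]
  refine ne_top_of_le_ne_top ?_ (lintegral_union_le _ _ _)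
  rwa [lintegral_Iic, zero_add]

theorem inv_sqrt_mul_inv_sqrt_le {x y : ℝ} (hx : 0 < x) (hy : 0 < y) :
    (√x)⁻¹ * (√y)⁻¹ ≤ (√(x + y))⁻¹ * ((√x)⁻¹ + (√y)⁻¹) := by
  have : √(x + y) ≤ √x + √y := by
    simpa only [Real.sqrt_eq_rpow] using
      Real.rpow_add_le_add_rpow hx.le hy.le one_half_pos.le one_half_lt_one.le
  have := Real.sqrt_pos.2 hx
  have := Real.sqrt_pos.2 hy
  have := Real.sqrt_pos.2 (add_pos hx hy)
  field_simp
  linarith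

theorem ofReal_inv_sqrt_mul_ofReal_inv_sqrt_sub_le {u : ℝ} (hu : u ≤ 1) (x : ℝ) :
    ENNReal.ofReal (√x)⁻¹ * ENNReal.ofReal (√(u - x))⁻¹ ≤ ENNReal.ofReal (√u)⁻¹ *
      ((Iic 1).indicator (fun v => ENNReal.ofReal (√v)⁻¹) x +
        (Iic 1).indicator (fun v => ENNReal.ofReal (√v)⁻¹) (u - x)) := by
  rcases le_or_gt x 0 with hx | hx
  · simp [Real.sqrt_eq_zero_of_nonpos hx]
  rcases le_or_gt (u - x) 0 with hux | hux
  · simp [Real.sqrt_eq_zero_of_nonpos hux]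
  have h_le := inv_sqrt_mul_inv_sqrt_le hx hux
  rw [add_sub_cancel] at h_le
  rw [indicator_of_mem (mem_Iic.2 (by linarith)), indicator_of_mem (mem_Iic.2 (by linarith)),
    ← ENNReal.ofReal_mul (by positivity), ← ENNReal.ofReal_add (by positivity) (by positivity),
    ← ENNReal.ofReal_mul (by positivity)]
  exact ENNReal.ofReal_le_ofReal h_le

theorem exists_lintegral_inv_sqrt_mul_inv_sqrt_sub_le : ∃ C : ℝ≥0∞, C ≠ ∞ ∧ ∀ u : ℝ, u ≤ 1 →
    ∫⁻ x, ENNReal.ofReal (√x)⁻¹ * ENNReal.ofReal (√(u - x))⁻¹ ≤ C * ENNReal.ofReal (√u)⁻¹ := by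
  set I := ∫⁻ x in Iic (1 : ℝ), ENNReal.ofReal (√x)⁻¹
  set r := (Iic 1).indicator fun v : ℝ => ENNReal.ofReal (√v)⁻¹
  have lintegral_r : ∫⁻ x, r x = I := lintegral_indicator measurableSet_Iic _
  refine ⟨2 * I, ENNReal.mul_ne_top ENNReal.ofNat_ne_top setLIntegral_Iic_inv_sqrt_ne_top,
    fun u hu => ?_⟩
  calc ∫⁻ x, ENNReal.ofReal (√x)⁻¹ * ENNReal.ofReal (√(u - x))⁻¹
      ≤ ∫⁻ x, ENNReal.ofReal (√u)⁻¹ * (r x + r (u - x)) :=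
        lintegral_mono (ofReal_inv_sqrt_mul_ofReal_inv_sqrt_sub_le hu)
    _ = ENNReal.ofReal (√u)⁻¹ * (I + I) := by
        rw [lintegral_const_mul' _ _ ENNReal.ofReal_ne_top,
          lintegral_add_left (Measurable.indicator (by fun_prop) measurableSet_Iic),
          lintegral_sub_left_eq_self r u, lintegral_r]
    _ = 2 * I * ENNReal.ofReal (√u)⁻¹ := by ring

theorem gaussianPDF_zero_toNNReal_zero (u : ℝ) :
    gaussianPDF 0 u.toNNReal 0 = ENNReal.ofReal (√(2 * Real.pi))⁻¹ * ENNReal.ofReal (√u)⁻¹ := by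
  rw [← ENNReal.ofReal_mul (by positivity), gaussianPDF, gaussianPDFReal]
  rcases le_or_gt u 0 with hu | hu
  · simp [Real.toNNReal_of_nonpos hu, Real.sqrt_eq_zero_of_nonpos hu]
  · rw [Real.coe_toNNReal _ hu.le, Real.sqrt_mul (by positivity), mul_inv]
    simp

theorem exists_lintegral_gaussianPDF_mul_gaussianPDF_sub_le : ∃ C : ℝ≥0∞, C ≠ ∞ ∧ ∀ u : ℝ, u ≤ 1 →
    ∫⁻ v, gaussianPDF 0 v.toNNReal 0 * gaussianPDF 0 (u - v).toNNReal 0 ≤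
      C * gaussianPDF 0 u.toNNReal 0 := by
  obtain ⟨C, hC, h_le⟩ := exists_lintegral_inv_sqrt_mul_inv_sqrt_sub_le
  set c := ENNReal.ofReal (√(2 * Real.pi))⁻¹ with hc
  have c_ne_top : c ≠ ∞ := ENNReal.ofReal_ne_top
  refine ⟨c * C, ENNReal.mul_ne_top c_ne_top hC, fun u hu => ?_⟩
  simp only [gaussianPDF_zero_toNNReal_zero, ← hc]
  calc ∫⁻ v, c * ENNReal.ofReal (√v)⁻¹ * (c * ENNReal.ofReal (√(u - v))⁻¹)
      = c * c * ∫⁻ v, ENNReal.ofReal (√v)⁻¹ * ENNReal.ofReal (√(u - v))⁻¹ := by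
        rw [← lintegral_const_mul' _ _ (ENNReal.mul_ne_top c_ne_top c_ne_top)]
        simp only [mul_mul_mul_comm c c]
    _ ≤ c * c * (C * ENNReal.ofReal (√u)⁻¹) := by
        gcongr
        exact h_le u hu
    _ = c * C * (c * ENNReal.ofReal (√u)⁻¹) := by ring

variable {n : ℕ}

theorem brownianPDF_snoc_snoc_zero (s : Fin n → ℝ) (v u : ℝ) :
    brownianPDF (Fin.snoc (Fin.snoc s v : Fin (n + 1) → ℝ) u) 0 =
      brownianPDF (Fin.snoc s v) 0 * gaussianPDF 0 (u - v).toNNReal 0 := by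
  simp only [brownianPDF, map_zero, Pi.zero_apply]
  rw [Fin.prod_univ_castSucc, increments_snoc, Fin.cons_snoc_eq_snoc_cons]
  simp only [Fin.snoc_castSucc, Fin.snoc_last]

theorem exists_lintegral_brownianPDF_snoc_zero_le (n : ℕ) : ∃ C : ℝ≥0∞, C ≠ ∞ ∧ ∀ u : ℝ, u ≤ 1 →
    ∫⁻ s : Fin n → ℝ, brownianPDF (Fin.snoc s u) 0 ≤ C * gaussianPDF 0 u.toNNReal 0 := by
  induction n with
  | zero =>
    refine ⟨1, ENNReal.one_ne_top, fun u _ => ?_⟩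
    simp [brownianPDF, increments_apply, Fin.snoc, lintegral_unique, volume_pi]
  | succ n ih =>
    obtain ⟨C, hC, lintegral_le⟩ := ih
    obtain ⟨D, hD, convolution_le⟩ := exists_lintegral_gaussianPDF_mul_gaussianPDF_sub_le
    refine ⟨C * D, ENNReal.mul_ne_top hC hD, fun u hu => ?_⟩
    have measurable_comp : Measurable fun s : Fin (n + 1) → ℝ => brownianPDF (Fin.snoc s u) 0 :=
      (measurable_uncurry_brownianPDF.of_uncurry_right (y := 0)).comp (by fun_prop : Measurable
        fun s : Fin (n + 1) → ℝ => (Fin.snoc s u : Fin (n + 2) → ℝ))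
    calc ∫⁻ s : Fin (n + 1) → ℝ, brownianPDF (Fin.snoc s u) 0
        = ∫⁻ v, (∫⁻ s : Fin n → ℝ, brownianPDF (Fin.snoc s v) 0) *
            gaussianPDF 0 (u - v).toNNReal 0 := by
          rw [lintegral_fin_succ_eq_lintegral_snoc measurable_comp]
          simp only [brownianPDF_snoc_snoc_zero,
            lintegral_mul_const' _ _ gaussianPDF_ne_top]
      _ ≤ ∫⁻ v, C * (gaussianPDF 0 v.toNNReal 0 * gaussianPDF 0 (u - v).toNNReal 0) := by
          refine lintegral_mono fun v => ?_
          rw [← mul_assoc]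
          rcases le_or_gt v 1 with hv | hv
          · gcongr
            exact lintegral_le v hv
          · simp [Real.toNNReal_of_nonpos (by linarith : u - v ≤ 0)]
      _ ≤ C * D * gaussianPDF 0 u.toNNReal 0 := by
          rw [lintegral_const_mul' _ _ hC, mul_assoc]
          gcongr
          exact convolution_le u hu

theorem lintegral_bridgePDF_zero_ne_top (n : ℕ) :
    ∫⁻ s : Fin n → ℝ, bridgePDF s 0 ≠ ∞ := by
  obtain ⟨C, hC, lintegral_le⟩ := exists_lintegral_brownianPDF_snoc_zero_le n
  simp only [bridgePDF, snoc_zero_eq_zero, div_eq_mul_inv]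
  have inv_ne_top := ENNReal.inv_ne_top.2 gaussianPDF_zero_one_zero_ne_zero
  rw [lintegral_mul_const' _ _ inv_ne_top]
  refine ENNReal.mul_ne_top (ne_top_of_le_ne_top ?_ (lintegral_le 1 le_rfl)) inv_ne_top
  exact ENNReal.mul_ne_top hC gaussianPDF_ne_top

end Integrability

section KacMomentFormula

variable {Ω : Type} [MeasurableSpace Ω] {P : Measure Ω}

theorem IsLocalTimeField.ae_tendsto_lintegral_uniformBallPDF {H : ℝ → Ω → ℝ} {L : ℝ → ℝ → Ω → ℝ}
    (hL : IsLocalTimeField P H L) {s : ℝ} (hs : 0 ≤ s) (b : ℝ) :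
    ∀ᵐ ω ∂P, Tendsto (fun r => ∫⁻ t in Icc 0 s, uniformBallPDF b r (H t ω)) (𝓝[>] 0)
      (𝓝 (ENNReal.ofReal (L s b ω))) := by
  filter_upwards [hL.cont, hL.occupation] with ω continuous_L occupation
  have continuous_ofReal : Continuous fun x => ENNReal.ofReal (L s x ω) :=
    ENNReal.continuous_ofReal.comp (continuous_L.comp (by fun_prop : Continuous fun x => (s, x)))
  have lintegral_eq (r : ℝ) : ∫⁻ t in Icc 0 s, uniformBallPDF b r (H t ω) =
      ⨍⁻ x in Metric.closedBall b r, ENNReal.ofReal (L s x ω) ∂volume := by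
    rw [occupation s hs _ (measurable_uniformBallPDF b r),
      lintegral_uniformBallPDF_mul b r continuous_ofReal.measurable]
  simp_rw [lintegral_eq]
  exact tendsto_setLAverage_closedBall volume continuous_ofReal.continuousAt

variable {n : ℕ}

theorem measurable_setLAverage_bridgePDF (y : ℝ) (A : Set (Fin n → ℝ)) :
    Measurable fun s : Fin n → ℝ => ⨍⁻ z in A, bridgePDF s (z - y • s) ∂volume := by
  have measurable_comp : Measurable fun p : (Fin n → ℝ) × (Fin n → ℝ) =>
      Function.uncurry bridgePDF (p.1, p.2 - y • p.1) :=
    measurable_uncurry_bridgePDF.comp (by fun_prop : Measurable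
      fun p : (Fin n → ℝ) × (Fin n → ℝ) => (p.1, p.2 - y • p.1))
  simp_rw [setLAverage_eq]
  exact measurable_comp.lintegral_prod_right'.div_const _

theorem setLAverage_bridgePDF_le (y : ℝ) (A : Set (Fin n → ℝ)) (s : Fin n → ℝ) :
    ⨍⁻ z in A, bridgePDF s (z - y • s) ∂volume ≤ bridgePDF s 0 :=
  (lintegral_mono fun z => bridgePDF_le_bridgePDF_zero s (z - y • s)).trans
    ((lintegral_const _).le.trans (mul_le_of_le_one_right' (by
      rw [Measure.smul_apply, smul_eq_mul]; exact ENNReal.inv_mul_le_one _)))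

theorem tendsto_lintegral_setLAverage_bridgePDF (y b : ℝ) :
    Tendsto (fun r => ∫⁻ s in timeSimplex n,
        ⨍⁻ z in Metric.closedBall (fun _ => b) r, bridgePDF s (z - y • s) ∂volume) (𝓝[>] 0)
      (𝓝 (∫⁻ s in timeSimplex n, bridgePDF s ((fun _ => b) - y • s))) := by
  refine tendsto_lintegral_filter_of_dominated_convergence (fun s => bridgePDF s 0)
    (.of_forall fun r => measurable_setLAverage_bridgePDF y _)
    (.of_forall fun r => .of_forall fun s => setLAverage_bridgePDF_le y _ s)
    (ne_top_of_le_ne_top (lintegral_bridgePDF_zero_ne_top n) (setLIntegral_le_lintegral _ _))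
    (.of_forall fun s => ?_)
  exact tendsto_setLAverage_closedBall volume (g := fun z => bridgePDF s (z - y • s))
    ((continuous_bridgePDF s).comp (by fun_prop)).continuousAt

variable {B : ℝ → Ω → ℝ}

theorem IsBrownianMotion.lintegral_lintegral_uniformBallPDF_bridge_pow
    (hB : IsBrownianMotion P B) (y b : ℝ) {r : ℝ} (hr : 0 < r) (n : ℕ) :
    ∫⁻ ω, (∫⁻ t in Icc 0 1, uniformBallPDF b r (bridge B y t ω)) ^ n ∂P =
      n.factorial * ∫⁻ s in timeSimplex n,
        ⨍⁻ z in Metric.closedBall (fun _ => b) r, bridgePDF s (z - y • s) ∂volume := by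
  have := hB.isProb
  rw [lintegral_setLIntegral_Icc_pow_eq (hB.measurable_bridge y) (hB.ae_continuous_bridge y)
    (measurable_uniformBallPDF b r)]
  congr 1
  refine setLIntegral_congr_fun (measurableSet_timeSimplex n) fun s hs => ?_
  simp only [prod_uniformBallPDF (fun _ => b) hr]
  rw [hB.lintegral_bridge y hs (measurable_uniformBallPDF _ r), lintegral_uniformBallPDF_mul]
  exact (measurable_bridgePDF s).comp (by fun_prop)

theorem IsLocalTimeField.lintegral_bridge_pow_eq (hB : IsBrownianMotion P B) {y : ℝ}
    {K : ℝ → ℝ → Ω → ℝ} (hK : IsLocalTimeField P (bridge B y) K) (b : ℝ) (n : ℕ) :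
    ∫⁻ ω, ENNReal.ofReal (K 1 b ω) ^ n ∂P =
      n.factorial * ∫⁻ s in timeSimplex n, bridgePDF s ((fun _ => b) - y • s) := by
  have := hB.isProb
  set Z : ℝ → Ω → ℝ≥0∞ := fun r ω => ∫⁻ t in Icc 0 1, uniformBallPDF b r (bridge B y t ω)
  have lintegral_Z_pow : ∀ᶠ r in 𝓝[>] 0, ∀ k : ℕ, ∫⁻ ω, Z r ω ^ k ∂P = k.factorial *
      ∫⁻ s in timeSimplex k,
        ⨍⁻ z in Metric.closedBall (fun _ => b) r, bridgePDF s (z - y • s) ∂volume :=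
    eventually_mem_nhdsWithin.mono fun r hr =>
      hB.lintegral_lintegral_uniformBallPDF_bridge_pow y b hr
  have lintegral_Z_pow_le : ∀ᶠ r in 𝓝[>] 0,
      ∫⁻ ω, Z r ω ^ (n + 1) ∂P ≤ (n + 1).factorial * ∫⁻ s : Fin (n + 1) → ℝ, bridgePDF s 0 := by
    filter_upwards [lintegral_Z_pow] with r hr
    rw [hr]
    gcongr
    · exact Measure.restrict_le_self
    · exact setLAverage_bridgePDF_le y _ _
  refine tendsto_nhds_unique (tendsto_lintegral_pow_of_ae_tendsto (Z := Z)
    (fun r => aemeasurable_lintegral_comp_of_ae_continuous (hB.measurable_bridge y)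
      (hB.ae_continuous_bridge y) (measurable_uniformBallPDF b r) _)
    (hK.ae_tendsto_lintegral_uniformBallPDF zero_le_one b) n
    (ENNReal.mul_ne_top (ENNReal.natCast_ne_top _) (lintegral_bridgePDF_zero_ne_top (n + 1)))
    lintegral_Z_pow_le) ?_
  refine Tendsto.congr' (lintegral_Z_pow.mono fun r hr => (hr n).symm) ?_
  exact ENNReal.Tendsto.const_mul (tendsto_lintegral_setLAverage_bridgePDF y b)
    (.inr (ENNReal.natCast_ne_top _))

end KacMomentFormula

section Comparison

variable {Ω Ω' : Type} [MeasurableSpace Ω] [MeasurableSpace Ω'] {P : Measure Ω} {P' : Measure Ω'}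

theorem lintegral_exp_mul_sq_eq_tsum {f : Ω → ℝ} (hf : Measurable f) (hf₀ : ∀ ω, 0 ≤ f ω) {c : ℝ}
    (hc : 0 ≤ c) : ∫⁻ ω, ENNReal.ofReal (Real.exp (c * f ω ^ 2)) ∂P =
      ∑' n : ℕ, ENNReal.ofReal (c ^ n / n.factorial) *
        ∫⁻ ω, ENNReal.ofReal (f ω) ^ (2 * n) ∂P := by
  have ofReal_exp_eq (ω : Ω) : ENNReal.ofReal (Real.exp (c * f ω ^ 2)) =
      ∑' n : ℕ, ENNReal.ofReal (c ^ n / n.factorial) * ENNReal.ofReal (f ω) ^ (2 * n) := by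
    have hasSum_exp := NormedSpace.expSeries_div_hasSum_exp (c * f ω ^ 2)
    rw [← Real.exp_eq_exp_ℝ] at hasSum_exp
    rw [← hasSum_exp.tsum_eq,
      ENNReal.ofReal_tsum_of_nonneg (fun n => by positivity) hasSum_exp.summable]
    refine tsum_congr fun n => ?_
    rw [← ENNReal.ofReal_pow (hf₀ ω), ← ENNReal.ofReal_mul (by positivity), mul_pow, pow_mul,
      mul_div_right_comm]
  simp_rw [ofReal_exp_eq]
  rw [lintegral_tsum fun n => by fun_prop]
  exact tsum_congr fun n => lintegral_const_mul' _ _ ENNReal.ofReal_ne_top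

theorem lintegral_bridge_localTime_pow_le {B : ℝ → Ω → ℝ} (hB : IsBrownianMotion P B)
    {B' : ℝ → Ω' → ℝ} (hB' : IsBrownianMotion P' B') {y : ℝ} {K : ℝ → ℝ → Ω → ℝ}
    (hK : IsLocalTimeField P (bridge B y) K) {K' : ℝ → ℝ → Ω' → ℝ}
    (hK' : IsLocalTimeField P' (bridge B' 0) K') (b : ℝ) (n : ℕ) :
    ∫⁻ ω, ENNReal.ofReal (K 1 b ω) ^ n ∂P ≤ ∫⁻ ω, ENNReal.ofReal (K' 1 0 ω) ^ n ∂P' := by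
  have sub_eq_zero (s : Fin n → ℝ) : (fun _ => 0) - (0 : ℝ) • s = 0 := by
    simp [← Pi.zero_def]
  rw [hK.lintegral_bridge_pow_eq hB, hK'.lintegral_bridge_pow_eq hB']
  simp only [sub_eq_zero]
  gcongr
  exact bridgePDF_le_bridgePDF_zero _ _

end Comparison

theorem bridge_local_time_comparison_general {Ω₁ Ω₂ : Type} [MeasurableSpace Ω₁]
    [MeasurableSpace Ω₂] {P₁ : Measure Ω₁} {P₂ : Measure Ω₂} {β₁ : ℝ → Ω₁ → ℝ} {β₂ : ℝ → Ω₂ → ℝ}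
    (hβ₁ : IsBrownianMotion P₁ β₁) (hβ₂ : IsBrownianMotion P₂ β₂) {y : ℝ}
    {Ky : ℝ → ℝ → Ω₁ → ℝ} (hKy : IsLocalTimeField P₁ (bridge β₁ y) Ky)
    {K0 : ℝ → ℝ → Ω₂ → ℝ} (hK0 : IsLocalTimeField P₂ (bridge β₂ 0) K0)
    (b : ℝ) {c : ℝ} (hc : 0 ≤ c) :
    ∫⁻ ω, ENNReal.ofReal (Real.exp (c * Ky 1 b ω ^ 2)) ∂P₁
      ≤ ∫⁻ ω, ENNReal.ofReal (Real.exp (c * K0 1 0 ω ^ 2)) ∂P₂ := by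
  rw [lintegral_exp_mul_sq_eq_tsum (hKy.meas 1 b) (hKy.nonneg 1 b) hc,
    lintegral_exp_mul_sq_eq_tsum (hK0.meas 1 0) (hK0.nonneg 1 0) hc]
  gcongr
  exact lintegral_bridge_localTime_pow_le hβ₁ hβ₂ hKy hK0 b _

end

/-- **Lemma (comparison of bridge local times).**  Let `P^y` be the law of a
Brownian bridge from `0` at time `0` to `y` at time `1` (realized as
`X_t = β_t − t β₁ + t y` for a standard Brownian motion `β`) and `K₁(a)` its
local time at level `a` up to time `1`.  Then for every `a > 0` and `y ≥ 0`,
`E^y[exp(4a K₁(y)²)] ≤ E^0[exp(4a K₁(0)²)]` and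
`E^y[exp(4a K₁(−y)²)] ≤ E^0[exp(4a K₁(0)²)]`. -/
theorem bridge_local_time_comparison (y : ℝ) (hy : 0 ≤ y)
    (Ω₁ : Type) [MeasurableSpace Ω₁] (P₁ : Measure Ω₁) (β₁ : ℝ → Ω₁ → ℝ)
    (hβ₁ : IsBrownianMotion P₁ β₁) (Ky : ℝ → ℝ → Ω₁ → ℝ)
    (hKy : IsLocalTimeField P₁ (fun t ω => β₁ t ω - t * β₁ 1 ω + t * y) Ky)
    (Ω₂ : Type) [MeasurableSpace Ω₂] (P₂ : Measure Ω₂) (β₂ : ℝ → Ω₂ → ℝ)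
    (hβ₂ : IsBrownianMotion P₂ β₂) (K0 : ℝ → ℝ → Ω₂ → ℝ)
    (hK0 : IsLocalTimeField P₂ (fun t ω => β₂ t ω - t * β₂ 1 ω) K0) :
    ∀ a : ℝ, 0 < a →
      (∫⁻ ω, ENNReal.ofReal (Real.exp (4 * a * Ky 1 y ω ^ 2)) ∂P₁
        ≤ ∫⁻ ω, ENNReal.ofReal (Real.exp (4 * a * K0 1 0 ω ^ 2)) ∂P₂) ∧
      (∫⁻ ω, ENNReal.ofReal (Real.exp (4 * a * Ky 1 (-y) ω ^ 2)) ∂P₁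
        ≤ ∫⁻ ω, ENNReal.ofReal (Real.exp (4 * a * K0 1 0 ω ^ 2)) ∂P₂) := by
  intro a ha
  have hK0' : IsLocalTimeField P₂ (bridge β₂ 0) K0 := bridge_zero β₂ ▸ hK0
  have lintegral_le (b : ℝ) := bridge_local_time_comparison_general hβ₁ hβ₂ hKy hK0' b (c := 4 * a)
    (by positivity)
  exact ⟨lintegral_le y, lintegral_le (-y)⟩
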